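/- arXiv:2209.14176 — 2 statements merged into one kernel-verified Lean document; each statement's English description precedes it below -/
import Mathlib

section
/- For every tuple-weighted graph (G,w,k), X_{(G,w,k)} = Σ_{S ⊆ E(G)} (−1)^{|S|} p_{λ^k(S)}, where the sum ranges over all sub-multisets S of the edge multiset E(G), and λ^k(S) is the k-tuple partition whose tuples are the total weights of the connected components of the graph (V(G),S) with vertex weighting w. -/
/-!
Fix an exponent `d` and compare coefficients. The coefficient of `x^d` in `p_{λ(S)}` counts the
colorings `κ` of total weight `d` that are constant on every connected component of `(V, S)`
(`coeff_pTerm`), equivalently those for which every edge of `S` is monochromatic. Since the weights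
are nonzero there are only finitely many colorings of total weight `d` (`finite_colorings`), so the
sum over `S` may be exchanged with the sum over colorings. What remains for each coloring is
`∑_{S ⊆ E} (-1)^|S| [all edges of S are monochromatic]`, which is the expansion of
`∏_{e ∈ E} (1 - [e is monochromatic])`, i.e. the indicator that `κ` is proper
(`sum_powerset_sign`).
-/

/-!
Statement 2: the power-sum expansion
`X_{(G,w,k)} = Σ_{S ⊆ E(G)} (−1)^{|S|} p_{λ^k(S)}`.
-/

/-- A tuple-weighted graph on a vertex type `V`. -/
structure TWG (V : Type) (k : ℕ) where
  edges : Multiset (Sym2 V)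
  w : V → Fin k → ℕ

/-- A coloring `κ : V → ℕ` is proper if the endpoints of every edge get different colors. -/
def TWG.Proper {V : Type} {k : ℕ} (G : TWG V k) (κ : V → ℕ) : Prop :=
  ∀ u v : V, s(u, v) ∈ G.edges → κ u ≠ κ v

/-- The exponent finsupp of the monomial `x_c^{(a 0, …, a (k-1))}`. -/
noncomputable def wtF {k : ℕ} (c : ℕ) (a : Fin k → ℕ) : (ℕ × Fin k) →₀ ℕ :=
  ∑ j : Fin k, Finsupp.single (c, j) (a j)

/-- The chromatic `k`-multisymmetric function `X_{(G,w,k)}`, by its coefficients. -/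
noncomputable def Xms {V : Type} [Fintype V] {k : ℕ} (G : TWG V k) :
    MvPowerSeries (ℕ × Fin k) ℚ :=
  fun d => (Nat.card {κ : V → ℕ // G.Proper κ ∧ ∑ v : V, wtF (κ v) (G.w v) = d} : ℚ)

/-- The power-sum `k`-multisymmetric function `p_α = Σ_{j ∈ ℕ} x_j^α` (for `α ≠ 0`),
by its coefficients. -/
noncomputable def pPow {k : ℕ} (a : Fin k → ℕ) : MvPowerSeries (ℕ × Fin k) ℚ :=
  fun d => (Nat.card {j : ℕ // wtF j a = d} : ℚ)

/-- The graph `(V, S)` on the vertex set of `G` with edge multiset `S`, as a simple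
graph (for the purpose of taking connected components). -/
def spanGraph {V : Type} (S : Multiset (Sym2 V)) : SimpleGraph V :=
  SimpleGraph.fromRel (fun u v => s(u, v) ∈ S)

/-- The total weight of the connected component `c` of `(V, S)`. -/
noncomputable def compWeight {V : Type} [Fintype V] {k : ℕ} (G : TWG V k)
    (S : Multiset (Sym2 V)) (c : (spanGraph S).ConnectedComponent) : Fin k → ℕ :=
  ∑ᶠ (v : V) (_ : (spanGraph S).connectedComponentMk v = c), G.w v

/-- `p_{λ^k(S)}`: the product of the power sums `p_α` over the total weights `α` of the
connected components of `(V(G), S)`. -/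
noncomputable def pTerm {V : Type} [Fintype V] {k : ℕ} (G : TWG V k)
    (S : Multiset (Sym2 V)) : MvPowerSeries (ℕ × Fin k) ℚ :=
  ∏ᶠ c : (spanGraph S).ConnectedComponent, pPow (compWeight G S c)

lemma wtF_apply {k : ℕ} (c : ℕ) (a : Fin k → ℕ) (j : Fin k) : wtF c a (c, j) = a j := by
  classical
  simp [wtF, Finsupp.finsetSum_apply, Finsupp.single_apply]

lemma wtF_apply_of_ne {k : ℕ} {c c' : ℕ} (h : c ≠ c') (a : Fin k → ℕ) (j : Fin k) :
    wtF c a (c', j) = 0 := by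
  classical
  simp [wtF, Finsupp.finsetSum_apply, h]

lemma wtF_injective {k : ℕ} {a : Fin k → ℕ} (ha : a ≠ 0) :
    Function.Injective (fun c => wtF c a) := by
  intro c c' h
  by_contra hne
  apply ha
  funext j
  have h1 : wtF c a (c, j) = wtF c' a (c, j) := by rw [show wtF c a = wtF c' a from h]
  rwa [wtF_apply, wtF_apply_of_ne (Ne.symm hne)] at h1

lemma wtF_sum {k : ℕ} {ι : Type} (c : ℕ) (s : Finset ι) (a : ι → Fin k → ℕ) :
    wtF c (∑ i ∈ s, a i) = ∑ i ∈ s, wtF c (a i) := by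
  simp only [wtF, Finset.sum_apply, Finsupp.single_finsetSum]
  exact Finset.sum_comm

lemma finite_wtF_fiber {k : ℕ} {a : Fin k → ℕ} (ha : a ≠ 0) (d : (ℕ × Fin k) →₀ ℕ) :
    Finite {j : ℕ // wtF j a = d} := by
  have : Subsingleton {j : ℕ // wtF j a = d} :=
    ⟨fun x y => Subtype.ext (wtF_injective ha (x.2.trans y.2.symm))⟩
  infer_instance

/-- Sorting the colorings of total weight `d` by the weight that each vertex contributes. -/
noncomputable def coloringEquiv {k : ℕ} {ι : Type} [Fintype ι] [DecidableEq ι]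
    (a : ι → Fin k → ℕ) (d : (ℕ × Fin k) →₀ ℕ) :
    {f : ι → ℕ // ∑ i, wtF (f i) (a i) = d} ≃
      Σ l : {l // l ∈ (Finset.univ : Finset ι).finsuppAntidiag d},
        ∀ i, {j : ℕ // wtF j (a i) = l.1 i} where
  toFun f := ⟨⟨Finsupp.equivFunOnFinite.symm (fun i => wtF (f.1 i) (a i)), by
    simp [Finset.mem_finsuppAntidiag, f.2]⟩, fun i => ⟨f.1 i, by simp⟩⟩
  invFun x := ⟨fun i => (x.2 i).1, by
    refine Eq.trans ?_ (Finset.mem_finsuppAntidiag.1 x.1.2).1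
    exact Finset.sum_congr rfl fun i _ => (x.2 i).2⟩
  left_inv f := rfl
  right_inv x := by
    obtain ⟨⟨l, hl⟩, g⟩ := x
    -- The values of `g` are separated from the proofs about them, which mention `l`.
    obtain ⟨g, hg, rfl⟩ : ∃ (g' : ι → ℕ) (hg : ∀ i, wtF (g' i) (a i) = l i),
        g = fun i => ⟨g' i, hg i⟩ := ⟨fun i => (g i).1, fun i => (g i).2, rfl⟩
    have h : l = Finsupp.equivFunOnFinite.symm (fun i => wtF (g i) (a i)) := by
      ext1 i
      simpa using (hg i).symm
    subst h
    rfl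

lemma finite_colorings {k : ℕ} {ι : Type} [Fintype ι] (a : ι → Fin k → ℕ)
    (ha : ∀ i, a i ≠ 0) (d : (ℕ × Fin k) →₀ ℕ) :
    Finite {f : ι → ℕ // ∑ i, wtF (f i) (a i) = d} := by
  classical
  have := fun i => finite_wtF_fiber (ha i)
  exact Finite.of_equiv _ (coloringEquiv a d).symm

lemma coeff_prod_pPow {k : ℕ} {ι : Type} [Fintype ι] (a : ι → Fin k → ℕ)
    (ha : ∀ i, a i ≠ 0) (d : (ℕ × Fin k) →₀ ℕ) :
    MvPowerSeries.coeff d (∏ i, pPow (a i)) =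
      (Nat.card {f : ι → ℕ // ∑ i, wtF (f i) (a i) = d} : ℚ) := by
  classical
  have := fun i => finite_wtF_fiber (ha i)
  rw [MvPowerSeries.coeff_prod, Nat.card_congr (coloringEquiv a d), Nat.card_sigma]
  simp only [Nat.card_pi]
  push_cast
  rw [← Finset.sum_coe_sort]
  rfl

lemma eq_of_reachable {V : Type} {S : Multiset (Sym2 V)} {κ : V → ℕ}
    (h : ∀ u v, s(u, v) ∈ S → κ u = κ v) {u v : V} (p : (spanGraph S).Walk u v) :
    κ u = κ v := by
  induction p with
  | nil => rfl
  | cons hadj _ ih =>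
    rw [← ih]
    rw [spanGraph, SimpleGraph.fromRel_adj] at hadj
    rcases hadj.2 with h1 | h1
    · exact h _ _ h1
    · exact (h _ _ h1).symm

lemma mk_eq_of_mem {V : Type} {S : Multiset (Sym2 V)} {u v : V} (h : s(u, v) ∈ S) :
    (spanGraph S).connectedComponentMk u = (spanGraph S).connectedComponentMk v := by
  by_cases huv : u = v
  · rw [huv]
  · apply SimpleGraph.ConnectedComponent.sound
    apply SimpleGraph.Adj.reachable
    rw [spanGraph, SimpleGraph.fromRel_adj]
    exact ⟨huv, Or.inl h⟩

lemma compWeight_eq {V : Type} [Fintype V] {k : ℕ} (G : TWG V k) (S : Multiset (Sym2 V))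
    [DecidableEq (spanGraph S).ConnectedComponent]
    (c : (spanGraph S).ConnectedComponent) :
    compWeight G S c =
      ∑ v ∈ Finset.univ.filter (fun v => (spanGraph S).connectedComponentMk v = c), G.w v := by
  rw [compWeight, ← finsum_mem_coe_finset]
  simp

lemma compWeight_ne_zero {V : Type} [Fintype V] {k : ℕ} (G : TWG V k)
    (hw : ∀ v : V, G.w v ≠ 0) (S : Multiset (Sym2 V))
    (c : (spanGraph S).ConnectedComponent) : compWeight G S c ≠ 0 := by
  classical
  rw [compWeight_eq]
  induction c using SimpleGraph.ConnectedComponent.ind with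
  | h v =>
    intro h
    rw [Finset.sum_eq_zero_iff] at h
    exact hw v (h v (by simp))

lemma sum_wtF_comp {V : Type} [Fintype V] {k : ℕ} (G : TWG V k) (S : Multiset (Sym2 V))
    [Fintype (spanGraph S).ConnectedComponent] (f : (spanGraph S).ConnectedComponent → ℕ) :
    ∑ v, wtF (f ((spanGraph S).connectedComponentMk v)) (G.w v) =
      ∑ c, wtF (f c) (compWeight G S c) := by
  classical
  rw [← Finset.sum_fiberwise Finset.univ (fun v => (spanGraph S).connectedComponentMk v)]
  refine Finset.sum_congr rfl fun c _ => ?_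
  rw [compWeight_eq, wtF_sum]
  refine Finset.sum_congr rfl fun v hv => ?_
  rw [(Finset.mem_filter.1 hv).2]

/-- The coefficient of `x^d` in `p_{λ(S)}` counts the colorings of total weight `d` under which
every edge of `S` is monochromatic: these are the colorings of the components of `(V, S)`. -/
lemma coeff_pTerm {V : Type} [Fintype V] {k : ℕ} (G : TWG V k)
    (hw : ∀ v : V, G.w v ≠ 0) (S : Multiset (Sym2 V)) (d : (ℕ × Fin k) →₀ ℕ) :
    MvPowerSeries.coeff d (pTerm G S) =
      (Nat.card {κ : V → ℕ // (∀ u v, s(u, v) ∈ S → κ u = κ v) ∧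
        ∑ v, wtF (κ v) (G.w v) = d} : ℚ) := by
  classical
  have : Finite (spanGraph S).ConnectedComponent :=
    Finite.of_surjective _ (Quot.mk_surjective (r := (spanGraph S).Reachable))
  have := Fintype.ofFinite (spanGraph S).ConnectedComponent
  rw [pTerm, finprod_eq_prod_of_fintype, coeff_prod_pPow _ (compWeight_ne_zero G hw S)]
  congr 1
  refine Nat.card_congr
    { toFun := fun f => ⟨fun v => f.1 ((spanGraph S).connectedComponentMk v),
        fun u v h => congrArg f.1 (mk_eq_of_mem h), (sum_wtF_comp G S f.1).trans f.2⟩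
      invFun := fun κ => ⟨fun c => c.lift κ.1 (fun _ _ p _ => eq_of_reachable κ.2.1 p), by
        rw [← sum_wtF_comp]
        exact κ.2.2⟩
      left_inv := fun f => ?_
      right_inv := fun κ => rfl }
  apply Subtype.ext
  funext c
  induction c using SimpleGraph.ConnectedComponent.ind with
  | h v => rfl

lemma sum_powerset_sign {α : Type} (P : α → Prop) [DecidablePred P] (E : Multiset α) :
    (E.powerset.map (fun S => (-1 : ℚ) ^ (Multiset.card S) *
      if ∀ e ∈ S, P e then 1 else 0)).sum = if ∀ e ∈ E, ¬ P e then 1 else 0 := by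
  induction E using Multiset.induction_on with
  | empty => simp
  | cons a E ih =>
    rw [Multiset.powerset_cons, Multiset.map_add, Multiset.sum_add, ih, Multiset.map_map]
    by_cases ha : P a
    · have h : (fun S : Multiset α => (-1 : ℚ) ^ (Multiset.card S) *
          if ∀ e ∈ S, P e then 1 else 0) ∘ Multiset.cons a =
          fun S => -((-1 : ℚ) ^ (Multiset.card S) * if ∀ e ∈ S, P e then 1 else 0) := by
        funext S
        simp only [Function.comp_apply, Multiset.forall_mem_cons, ha, true_and,
          Multiset.card_cons, pow_succ]
        ring
      rw [h, Multiset.sum_map_neg, ih]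
      simp [ha]
    · simp [ha]

/-- for every tuple-weighted graph `(G,w,k)` (nonzero weight tuples),
`X_{(G,w,k)} = Σ_{S ⊆ E(G)} (−1)^{|S|} p_{λ^k(S)}`, the sum over all sub-multisets `S`
of the edge multiset. -/
theorem stmt2 {V : Type} [Fintype V] [DecidableEq V] {k : ℕ} (G : TWG V k)
    (hw : ∀ v : V, G.w v ≠ 0) :
    Xms G = (G.edges.powerset.map
      (fun S => ((-1 : ℚ) ^ (Multiset.card S)) • pTerm G S)).sum := by
  classical
  ext d
  have hfin := finite_colorings G.w hw d
  have := Fintype.ofFinite {κ : V → ℕ // ∑ v, wtF (κ v) (G.w v) = d}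
  have hcard : ∀ Q : (V → ℕ) → Prop,
      (Nat.card {κ : V → ℕ // Q κ ∧ ∑ v, wtF (κ v) (G.w v) = d} : ℚ) =
        ∑ κ : {κ : V → ℕ // ∑ v, wtF (κ v) (G.w v) = d}, if Q κ.1 then 1 else 0 := by
    intro Q
    rw [Finset.sum_boole, ← Fintype.card_subtype, ← Nat.card_eq_fintype_card]
    congr 1
    refine Nat.card_congr ((Equiv.subtypeEquivRight fun κ => and_comm).trans
      (Equiv.subtypeSubtypeEquivSubtypeInter _ _).symm)
  have hmono : ∀ (S : Multiset (Sym2 V)) (κ : V → ℕ),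
      (∀ u v, s(u, v) ∈ S → κ u = κ v) ↔ ∀ e ∈ S, (e.map κ).IsDiag := by
    intro S κ
    rw [Sym2.forall]
    simp
  have hproper : ∀ κ : V → ℕ, G.Proper κ ↔ ∀ e ∈ G.edges, ¬ (e.map κ).IsDiag := by
    intro κ
    rw [Sym2.forall]
    simp [TWG.Proper]
  have hX : MvPowerSeries.coeff d (Xms G) =
      (Nat.card {κ : V → ℕ // G.Proper κ ∧ ∑ v, wtF (κ v) (G.w v) = d} : ℚ) := rfl
  rw [hX, hcard, map_multiset_sum, Multiset.map_map]
  have hterm : ∀ S : Multiset (Sym2 V),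
      MvPowerSeries.coeff d (((-1 : ℚ) ^ (Multiset.card S)) • pTerm G S) =
        ∑ κ : {κ : V → ℕ // ∑ v, wtF (κ v) (G.w v) = d}, (-1 : ℚ) ^ (Multiset.card S) *
          if ∀ e ∈ S, (e.map κ.1).IsDiag then 1 else 0 := by
    intro S
    rw [map_smul, coeff_pTerm G hw, hcard, smul_eq_mul, Finset.mul_sum]
    simp only [hmono]
  simp only [Function.comp_def, hterm]
  have hswap : ∀ F : Multiset (Sym2 V) → {κ : V → ℕ // ∑ v, wtF (κ v) (G.w v) = d} → ℚ,
      (G.edges.powerset.map fun S => ∑ κ, F S κ).sum =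
        ∑ κ, (G.edges.powerset.map fun S => F S κ).sum :=
    fun F => Multiset.sum_map_sum_map _ Finset.univ.val
  rw [hswap]
  refine Finset.sum_congr rfl fun κ _ => ?_
  simp only [hproper]
  convert (sum_powerset_sign (fun e : Sym2 V => (e.map κ.1).IsDiag) G.edges).symm
end

section
/- Let L = c₁H₁ + … + c_mH_m ∈ Γ_k be a linear combination of k-vertex-labelled graphs with common vertex set V = V₁ ⊔ … ⊔ V_k such that L ∈ Ker(X_k), and let S ⊆ S_{V₁} × … × S_{V_k} be a sufficient permutation set for L. Suppose H* is a (k+1)-vertex-labelled graph that is an augmentation of the H_i, and that for every σ ∈ S we have H* = H*_{σ'} as labelled graphs, where σ' is the permutation of V(H*) that is the identity on V_{k+1} and restricts to σ on V. Then Lift(L;H*) ∈ Ker(X_{k+1}). -/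
/-!
Lifting is linear, so it suffices that the lift of every generator of the kernel-form
presentation is killed by `X_{k+1}`.

* For `G - G_σ` with `σ ∈ S`: since `H*` is fixed by `σ'`, the graph `Lift(G_σ; H*)` is the
  permuted graph `Lift(G; H*)_{σ'}` (`liftLG_permute`), and chromatic functions do not change
  under permutations of the vertices (`XLG_permute`).
* For an extension of the triangle relation: the lifts have the same vertex set and differ
  only by edges of a triangle `a b c`. If `b` and `c` receive different colors, then `a`
  differs in color from at least one of them, so the colorings counted by `D = {bc}` are the
  union of those counted by `{ac, bc}` and `{ab, bc}`, whose intersection is counted by the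
  full triangle (`XLG_triangle`). This needs no hypothesis on `a`, `b`, `c`, because an
  edge with an endpoint outside `H*` is discarded and constrains nothing; hence graphs in the
  presentation whose vertex set differs from `V` cause no trouble.
-/

/-!
Statement 11: if `L ∈ Ker(X_k)` has a sufficient permutation set `S` and `H*` is an
augmentation fixed by the extension of every `σ ∈ S`, then `Lift(L; H*) ∈ Ker(X_{k+1})`.
-/

/-- A `k`-vertex-labelled graph: the vertex set is `V₁ ⊔ … ⊔ V_k` where
`V_i = {(i, j) : j < α i}`, the vertices of `V_i` carry weight `ε_i`, and `edges` is a
multiset of unordered pairs of vertices (loops and multi-edges allowed). -/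
structure LG (k : ℕ) where
  α : Fin k → ℕ
  edges : Multiset (Sym2 (Fin k × ℕ))
  valid : ∀ e ∈ edges, ∀ p ∈ e, p.2 < α p.1

/-- The vertex set of a `k`-vertex-labelled graph, as a type. -/
abbrev LG.Vt {k : ℕ} (G : LG k) : Type := Σ i : Fin k, Fin (G.α i)

/-- A coloring of the vertices is proper if the endpoints of every edge receive
different colors. -/
def LG.Proper {k : ℕ} (G : LG k) (κ : G.Vt → ℕ) : Prop :=
  ∀ u v : G.Vt,
    s(((u.1, (u.2 : ℕ)) : Fin k × ℕ), ((v.1, (v.2 : ℕ)) : Fin k × ℕ)) ∈ G.edges →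
      κ u ≠ κ v

/-- The chromatic `k`-multisymmetric function of a `k`-vertex-labelled graph, given by
its coefficients: a vertex `(i,j)` colored `c` contributes the variable `(x_c)_i`. -/
noncomputable def XLG {k : ℕ} (G : LG k) : MvPowerSeries (ℕ × Fin k) ℚ :=
  fun d => (Nat.card {κ : G.Vt → ℕ //
    G.Proper κ ∧ ∑ v : G.Vt, Finsupp.single ((κ v, v.1) : ℕ × Fin k) 1 = d} : ℚ)

/-- `Γ_k`: formal ℚ-linear combinations of `k`-vertex-labelled graphs. -/
abbrev Gam (k : ℕ) := LG k →₀ ℚ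

/-- The linear map `X_k : Γ_k → Λ_k`. -/
noncomputable def Xk (k : ℕ) : Gam k →ₗ[ℚ] MvPowerSeries (ℕ × Fin k) ℚ :=
  Finsupp.linearCombination ℚ XLG

/-- The action of a tuple of permutations `σ ∈ S_{V₁} × … × S_{V_k}` on labels. -/
def permFun {k : ℕ} (α : Fin k → ℕ) (σ : ∀ i, Equiv.Perm (Fin (α i)))
    (p : Fin k × ℕ) : Fin k × ℕ :=
  if h : p.2 < α p.1 then (p.1, ((σ p.1) ⟨p.2, h⟩ : Fin (α p.1)).val) else p

/-- The graph `G_σ` obtained by applying `σ ∈ S_{V₁} × … × S_{V_k}` to the vertices. -/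
def LG.permute {k : ℕ} (G : LG k) (σ : ∀ i, Equiv.Perm (Fin (G.α i))) : LG k where
  α := G.α
  edges := G.edges.map (Sym2.map (permFun G.α σ))
  valid := by
    intro e he p hp
    rcases Multiset.mem_map.mp he with ⟨e₀, he₀, rfl⟩
    rcases Sym2.mem_map.mp hp with ⟨q, hq, rfl⟩
    have hqv := G.valid e₀ he₀ q hq
    simp [permFun, hqv]

/-- `T_iso(k)`: the set of all `ℓ_iso(G,σ) = G − G_σ`. -/
def Tiso (k : ℕ) : Set (Gam k) :=
  { x | ∃ (G : LG k) (σ : ∀ i, Equiv.Perm (Fin (G.α i))),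
      x = Finsupp.single G 1 - Finsupp.single (G.permute σ) 1 }

open Classical in
/-- Adding a multiset of (valid) extra edges to a graph, `G ⊎ M`. -/
noncomputable def LG.addE {k : ℕ} (G : LG k) (M : Multiset (Sym2 (Fin k × ℕ))) : LG k where
  α := G.α
  edges := G.edges + M.filter (fun e => ∀ p ∈ e, p.2 < G.α p.1)
  valid := by
    intro e he p hp
    rcases Multiset.mem_add.mp he with h | h
    · exact G.valid e h p hp
    · exact (Multiset.mem_filter.mp h).2 p hp

/-- For `t = (m,n,p)`, the vertex `a_t = (m, i_m)` with `i_m = 1` (0-indexed: 0). -/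
def osA {k : ℕ} (t : Fin k × Fin k × Fin k) : Fin k × ℕ := (t.1, 0)

/-- The vertex `b_t = (n, i_n)` with `i_n = 1 + δ_{mn}`. -/
def osB {k : ℕ} (t : Fin k × Fin k × Fin k) : Fin k × ℕ :=
  (t.2.1, if t.2.1 = t.1 then 1 else 0)

/-- The vertex `c_t = (p, i_p)` with `i_p = 1 + δ_{mp} + δ_{np}`. -/
def osC {k : ℕ} (t : Fin k × Fin k × Fin k) : Fin k × ℕ :=
  (t.2.2, (if t.2.2 = t.1 then 1 else 0) + (if t.2.2 = t.2.1 then 1 else 0))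

/-- `T_os(k)`: the set of all extensions `Ext(ℓ_{os(t)}; G)` of the triangular modular
relation by `k`-vertex-labelled graphs `G` whose vertex set contains `a_t, b_t, c_t`. -/
noncomputable def Tos (k : ℕ) : Set (Gam k) :=
  { x | ∃ (G : LG k) (t : Fin k × Fin k × Fin k),
      ((osA t).2 < G.α (osA t).1 ∧ (osB t).2 < G.α (osB t).1 ∧ (osC t).2 < G.α (osC t).1) ∧
      x = Finsupp.single (G.addE {s(osA t, osB t), s(osA t, osC t), s(osB t, osC t)}) 1
        - Finsupp.single (G.addE {s(osA t, osC t), s(osB t, osC t)}) 1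
        - Finsupp.single (G.addE {s(osA t, osB t), s(osB t, osC t)}) 1
        + Finsupp.single (G.addE {s(osB t, osC t)}) 1 }

/-- The inclusion of the vertex labels of a `k`-vertex-labelled graph into those of a
`(k+1)`-vertex-labelled graph. -/
def liftV {k : ℕ} (p : Fin k × ℕ) : Fin (k + 1) × ℕ := (p.1.castSucc, p.2)

/-- `Lift(H; H*) = H* ⊎ E(H)`. -/
noncomputable def liftLG {k : ℕ} (Hs : LG (k + 1)) (H : LG k) : LG (k + 1) :=
  Hs.addE (H.edges.map (Sym2.map liftV))

/-- Transport of a permutation of `Fin m` along an equality `m = n`. -/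
def castPerm {m n : ℕ} (h : m = n) (σ : Equiv.Perm (Fin m)) : Equiv.Perm (Fin n) :=
  (finCongr h).permCongr σ

/-- The permutation `σ'` of the vertices of the augmentation `H*` that is the identity
on `V_{k+1}` and restricts to `σ` on `V₁ ⊔ … ⊔ V_k`. -/
def extendPerm {k : ℕ} (Hs : LG (k + 1)) (α : Fin k → ℕ)
    (hAug : ∀ i : Fin k, Hs.α i.castSucc = α i) (σ : ∀ i, Equiv.Perm (Fin (α i))) :
    ∀ i : Fin (k + 1), Equiv.Perm (Fin (Hs.α i)) :=
  fun i =>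
    if h : i.val < k then
      castPerm
        (by have hi : (⟨i.val, h⟩ : Fin k).castSucc = i := Fin.ext (by simp)
            rw [← hAug ⟨i.val, h⟩, hi])
        (σ ⟨i.val, h⟩)
    else Equiv.refl _

/-- `κ` gives different colors to the endpoints of `e`; vacuous when an endpoint of `e` is
not a vertex of the vertex set with block sizes `α`. -/
def EdgeOK {k : ℕ} (α : Fin k → ℕ) (κ : (Σ i : Fin k, Fin (α i)) → ℕ)
    (e : Sym2 (Fin k × ℕ)) : Prop :=
  ∀ u v : Σ i : Fin k, Fin (α i),
    s(((u.1, (u.2 : ℕ)) : Fin k × ℕ), ((v.1, (v.2 : ℕ)) : Fin k × ℕ)) = e → κ u ≠ κ v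

lemma proper_iff {k : ℕ} (G : LG k) (κ : G.Vt → ℕ) :
    G.Proper κ ↔ ∀ e ∈ G.edges, EdgeOK G.α κ e := by
  constructor
  · rintro h e he u v rfl
    exact h u v he
  · intro h u v he
    exact h _ he u v rfl

/-- The edges discarded by `addE` impose no condition on colorings. -/
lemma proper_addE {k : ℕ} (G : LG k) (M : Multiset (Sym2 (Fin k × ℕ))) (κ : G.Vt → ℕ) :
    (G.addE M).Proper κ ↔ G.Proper κ ∧ ∀ e ∈ M, EdgeOK G.α κ e := by
  classical
  refine (proper_iff (G.addE M) κ).trans (Iff.trans ?_ (and_congr_left' (proper_iff G κ)).symm)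
  constructor
  · intro h
    refine ⟨fun e he => h e (Multiset.mem_add.mpr (Or.inl he)), ?_⟩
    rintro e he u v rfl
    refine h _ (Multiset.mem_add.mpr (Or.inr (Multiset.mem_filter.mpr ⟨he, ?_⟩))) u v rfl
    intro p hp
    rcases Sym2.mem_iff.mp hp with rfl | rfl
    · exact u.2.2
    · exact v.2.2
  · rintro ⟨h1, h2⟩ e he
    rcases Multiset.mem_add.mp he with h | h
    · exact h1 e h
    · exact h2 e (Multiset.mem_filter.mp h).1

/-- A monomial determines the set of colors in use, so only finitely many colorings
contribute to a given coefficient. -/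
lemma finite_colorings_s11 {k : ℕ} (α : Fin k → ℕ) (d : (ℕ × Fin k) →₀ ℕ) :
    {κ : (Σ i : Fin k, Fin (α i)) → ℕ |
      ∑ v, Finsupp.single ((κ v, v.1) : ℕ × Fin k) 1 = d}.Finite := by
  refine (Set.Finite.pi' (t := fun _ : (Σ i : Fin k, Fin (α i)) =>
    ((d.support.image Prod.fst : Finset ℕ) : Set ℕ)) (fun _ => Finset.finite_toSet _)).subset ?_
  rintro κ rfl v
  simp only [Finset.coe_image, Set.mem_image]
  refine ⟨(κ v, v.1), ?_, rfl⟩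
  rw [Finset.mem_coe, Finsupp.mem_support_iff, Finsupp.finsetSum_apply]
  intro h
  have := (Finset.sum_eq_zero_iff.mp h) v (Finset.mem_univ v)
  simp at this

/-- The triangle relation, stated in terms of proper colorings: if a coloring is proper for
`A` exactly when it is proper for both `B` and `C`, and for `D` exactly when it is proper for
`B` or `C`, then `X_A - X_B - X_C + X_D = 0`, coefficient by coefficient. -/
lemma XLG_incl_excl {k : ℕ} (Hs : LG k) (MA MB MC MD : Multiset (Sym2 (Fin k × ℕ)))
    (hA : ∀ κ : Hs.Vt → ℕ, (Hs.addE MA).Proper κ ↔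
      (Hs.addE MB).Proper κ ∧ (Hs.addE MC).Proper κ)
    (hD : ∀ κ : Hs.Vt → ℕ, (Hs.addE MD).Proper κ ↔
      (Hs.addE MB).Proper κ ∨ (Hs.addE MC).Proper κ) :
    XLG (Hs.addE MA) - XLG (Hs.addE MB) - XLG (Hs.addE MC) + XLG (Hs.addE MD) = 0 := by
  funext d
  let T (M : Multiset (Sym2 (Fin k × ℕ))) : Set (Hs.Vt → ℕ) :=
    {κ | (Hs.addE M).Proper κ ∧ ∑ v : Hs.Vt, Finsupp.single ((κ v, v.1) : ℕ × Fin k) 1 = d}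
  have hX : ∀ M, XLG (Hs.addE M) d = ((T M).ncard : ℚ) := fun M => rfl
  have hfin : ∀ M, (T M).Finite := fun M =>
    (finite_colorings_s11 Hs.α d).subset fun κ h => h.2
  have h1 : T MA = T MB ∩ T MC := by
    ext κ; have := hA κ; simp only [T, Set.mem_inter_iff, Set.mem_ofPred_eq]; tauto
  have h2 : T MD = T MB ∪ T MC := by
    ext κ; have := hD κ; simp only [T, Set.mem_union, Set.mem_ofPred_eq]; tauto
  have h3 := Set.ncard_union_add_ncard_inter (T MB) (T MC) (hfin _) (hfin _)
  rw [← h1, ← h2] at h3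
  have h4 : ((T MD).ncard : ℚ) + (T MA).ncard = (T MB).ncard + (T MC).ncard := by
    exact_mod_cast h3
  change XLG (Hs.addE MA) d - XLG (Hs.addE MB) d - XLG (Hs.addE MC) d + XLG (Hs.addE MD) d = 0
  rw [hX, hX, hX, hX]
  linarith

/-- If `b` and `c` have different colors, then `a` differs from one of them. -/
lemma EdgeOK_triangle {k : ℕ} {α : Fin k → ℕ} {κ : (Σ i : Fin k, Fin (α i)) → ℕ}
    {a b c : Fin k × ℕ} (h : EdgeOK α κ s(b, c)) :
    EdgeOK α κ s(a, b) ∨ EdgeOK α κ s(a, c) := by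
  -- if both fail, then `a`, `b`, `c` are all vertices and `κ b = κ a = κ c`
  have key : ∀ x y : Fin k × ℕ, ¬ EdgeOK α κ s(x, y) →
      ∃ u v : Σ i : Fin k, Fin (α i),
        (u.1, (u.2 : ℕ)) = x ∧ (v.1, (v.2 : ℕ)) = y ∧ κ u = κ v := by
    intro x y hxy
    simp only [EdgeOK, not_forall, not_not] at hxy
    obtain ⟨u, v, he, hk⟩ := hxy
    rcases Sym2.eq_iff.mp he with ⟨h1, h2⟩ | ⟨h1, h2⟩
    · exact ⟨u, v, h1, h2, hk⟩
    · exact ⟨v, u, h2, h1, hk.symm⟩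
  by_contra! hcon
  obtain ⟨u, v, hu, hv, huv⟩ := key _ _ hcon.1
  obtain ⟨u', w, hu', hw, huw⟩ := key _ _ hcon.2
  have huu : u = u' := by
    obtain ⟨i, x⟩ := u
    obtain ⟨i', x'⟩ := u'
    have := hu.trans hu'.symm
    simp only [Prod.mk.injEq] at this
    obtain ⟨rfl, h2⟩ := this
    rw [Fin.ext h2]
  subst huu
  exact h v w (by rw [hv, hw]) (huv.symm.trans huw)

lemma XLG_triangle {k : ℕ} (Hs : LG k) (M : Multiset (Sym2 (Fin k × ℕ))) (a b c : Fin k × ℕ) :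
    XLG (Hs.addE (M + {s(a, b), s(a, c), s(b, c)})) - XLG (Hs.addE (M + {s(a, c), s(b, c)}))
      - XLG (Hs.addE (M + {s(a, b), s(b, c)})) + XLG (Hs.addE (M + {s(b, c)})) = 0 := by
  apply XLG_incl_excl
  · intro κ
    simp only [proper_addE, Multiset.mem_add, or_imp, forall_and, Multiset.insert_eq_cons,
      Multiset.mem_cons, Multiset.mem_singleton, forall_eq]
    tauto
  · intro κ
    have := EdgeOK_triangle (α := Hs.α) (κ := κ) (a := a) (b := b) (c := c)
    simp only [proper_addE, Multiset.mem_add, or_imp, forall_and, Multiset.insert_eq_cons,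
      Multiset.mem_cons, Multiset.mem_singleton, forall_eq]
    tauto

lemma LG.eq_of_edges {k : ℕ} {G H : LG k} (h1 : G.α = H.α) (h2 : G.edges = H.edges) : G = H := by
  cases G; cases H; cases h1; cases h2; rfl

lemma liftLG_addE {k : ℕ} (Hs : LG (k + 1)) (G : LG k) (M : Multiset (Sym2 (Fin k × ℕ)))
    (hM : ∀ e ∈ M, ∀ p ∈ e, p.2 < G.α p.1) :
    liftLG Hs (G.addE M)
      = Hs.addE (G.edges.map (Sym2.map liftV) + M.map (Sym2.map liftV)) := by
  classical
  have : (G.addE M).edges = G.edges + M := by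
    change G.edges + _ = _
    rw [Multiset.filter_eq_self.mpr hM]
  rw [liftLG, this, Multiset.map_add]

lemma permFun_mk {k : ℕ} (α : Fin k → ℕ) (σ : ∀ i, Equiv.Perm (Fin (α i)))
    (u : Σ i : Fin k, Fin (α i)) :
    permFun α σ (u.1, (u.2 : ℕ)) = (u.1, ((σ u.1 u.2 : Fin (α u.1)) : ℕ)) := by
  simp [permFun]

lemma permFun_injective {k : ℕ} (α : Fin k → ℕ) (σ : ∀ i, Equiv.Perm (Fin (α i))) :
    Function.Injective (permFun α σ) := by
  refine Function.LeftInverse.injective (g := permFun α fun i => (σ i).symm) ?_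
  rintro ⟨i, j⟩
  by_cases h : j < α i
  · have h1 := permFun_mk α σ ⟨i, ⟨j, h⟩⟩
    have h2 := permFun_mk α (fun i => (σ i).symm) ⟨i, σ i ⟨j, h⟩⟩
    simp only [Equiv.symm_apply_apply] at h1 h2
    rw [h1, h2]
  · simp [permFun, h]

/-- Precomposition with `σ` is a bijection from the proper colorings of `G_σ` to those of
`G`, and it preserves the monomial. -/
lemma XLG_permute {k : ℕ} (G : LG k) (σ : ∀ i, Equiv.Perm (Fin (G.α i))) :
    XLG (G.permute σ) = XLG G := by
  funext d
  let τ : G.Vt ≃ G.Vt := Equiv.sigmaCongrRight σ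
  let E : (G.Vt → ℕ) ≃ (G.Vt → ℕ) := Equiv.arrowCongr τ.symm (Equiv.refl ℕ)
  have hE : ∀ κ v, E κ v = κ (τ v) := fun κ v => rfl
  refine congrArg (Nat.cast : ℕ → ℚ) (Nat.card_congr (Equiv.subtypeEquiv E ?_))
  intro κ
  refine and_congr ?_ ?_
  · have hmem : ∀ u v : G.Vt,
        s(((τ u).1, ((τ u).2 : ℕ)), ((τ v).1, ((τ v).2 : ℕ))) ∈ (G.permute σ).edges ↔
          s((u.1, (u.2 : ℕ)), (v.1, (v.2 : ℕ))) ∈ G.edges := by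
      intro u v
      have : s(((τ u).1, ((τ u).2 : ℕ)), ((τ v).1, ((τ v).2 : ℕ)))
          = Sym2.map (permFun G.α σ) s((u.1, (u.2 : ℕ)), (v.1, (v.2 : ℕ))) := by
        rw [Sym2.map_mk, permFun_mk, permFun_mk]; rfl
      rw [this]
      exact Multiset.mem_map_of_injective (Sym2.map.injective (permFun_injective G.α σ))
    constructor
    · intro h u v huv
      exact h (τ u) (τ v) ((hmem u v).mpr huv)
    · intro h u v huv
      obtain ⟨u, rfl⟩ := τ.surjective u
      obtain ⟨v, rfl⟩ := τ.surjective v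
      exact h u v ((hmem u v).mp huv)
  · have : ∑ v : G.Vt, Finsupp.single ((κ v, v.1) : ℕ × Fin k) 1
        = ∑ v : G.Vt, Finsupp.single ((E κ v, v.1) : ℕ × Fin k) 1 :=
      (Equiv.sum_comp τ fun v => Finsupp.single ((κ v, v.1) : ℕ × Fin k) 1).symm
    exact Eq.congr_left this

/-- `σ'` extends `σ`: the two actions on labels agree along the inclusion of labels. -/
lemma permFun_liftV {k : ℕ} (Hs : LG (k + 1)) (α : Fin k → ℕ)
    (hAug : ∀ i : Fin k, Hs.α i.castSucc = α i) (σ : ∀ i, Equiv.Perm (Fin (α i)))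
    (p : Fin k × ℕ) :
    permFun Hs.α (extendPerm Hs α hAug σ) (liftV p) = liftV (permFun α σ p) := by
  obtain ⟨i, j⟩ := p
  have hi := hAug i
  by_cases h : j < α i
  · have hs : j < Hs.α i.castSucc := hi ▸ h
    simp [permFun, liftV, h, hs, extendPerm, castPerm]
    rfl
  · have hs : ¬ j < Hs.α i.castSucc := hi ▸ h
    simp [permFun, liftV, h, hs]

/-- If `H*` is fixed by `σ'`, then lifting `G_σ` is the same as lifting `G` and then
applying `σ'`. -/
lemma liftLG_permute {k : ℕ} (Hs : LG (k + 1)) (G : LG k)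
    (hAug : ∀ i : Fin k, Hs.α i.castSucc = G.α i) (σ : ∀ i, Equiv.Perm (Fin (G.α i)))
    (hfix : Hs.permute (extendPerm Hs G.α hAug σ) = Hs) :
    liftLG Hs (G.permute σ) = (liftLG Hs G).permute (extendPerm Hs G.α hAug σ) := by
  classical
  have hlift : ∀ H : LG k, H.α = G.α →
      (liftLG Hs H).edges = Hs.edges + H.edges.map (Sym2.map liftV) := by
    intro H hH
    change Hs.edges + _ = _
    congr 1
    refine Multiset.filter_eq_self.mpr fun e he p hp => ?_
    obtain ⟨e₀, he₀, rfl⟩ := Multiset.mem_map.mp he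
    obtain ⟨q, hq, rfl⟩ := Sym2.mem_map.mp hp
    change q.2 < Hs.α q.1.castSucc
    rw [hAug, ← hH]
    exact H.valid e₀ he₀ q hq
  refine LG.eq_of_edges rfl ?_
  have h1 : Hs.edges.map (Sym2.map (permFun Hs.α (extendPerm Hs G.α hAug σ))) = Hs.edges :=
    congrArg LG.edges hfix
  refine (hlift (G.permute σ) rfl).trans ?_
  change _ = (liftLG Hs G).edges.map (Sym2.map (permFun Hs.α (extendPerm Hs G.α hAug σ)))
  rw [hlift _ rfl, Multiset.map_add, h1]
  congr 1
  change (G.edges.map (Sym2.map (permFun G.α σ))).map (Sym2.map liftV) = _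
  rw [Multiset.map_map, Multiset.map_map]
  refine Multiset.map_congr rfl fun e _ => ?_
  simp only [Function.comp_apply, Sym2.map_map]
  congr 1
  funext p
  exact (permFun_liftV Hs G.α hAug σ p).symm

/-- let `L = Σ cᵢHᵢ ∈ Γ_k` be a linear combination of
`k`-vertex-labelled graphs with common vertex set `V₁ ⊔ … ⊔ V_k` (block sizes `α₀`)
with `L ∈ Ker(X_k)`, and let `S` be a sufficient permutation set for `L` (i.e. `L` has
a kernel-form presentation `L = I + O` with `O ∈ span(T_os(k))` and `I` in the span of
the `ℓ_iso(G, σ)` with `σ ∈ S`).  Suppose `H*` is a `(k+1)`-vertex-labelled graph that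
is an augmentation of the `Hᵢ`, fixed (as a labelled graph) by the extension `σ'` of
every `σ ∈ S` by the identity on `V_{k+1}`.  Then `Lift(L; H*) ∈ Ker(X_{k+1})`. -/
theorem stmt11 (k : ℕ) (α₀ : Fin k → ℕ) (L : Gam k)
    (hsupp : ∀ H ∈ L.support, H.α = α₀)
    (hker : Xk k L = 0)
    (S : Set (∀ i, Equiv.Perm (Fin (α₀ i))))
    (hS : ∃ I O : Gam k, L = I + O ∧
      I ∈ Submodule.span ℚ
        { x | ∃ (G : LG k) (hG : G.α = α₀) (σ : ∀ i, Equiv.Perm (Fin (α₀ i))),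
            σ ∈ S ∧
            x = Finsupp.single G 1 -
              Finsupp.single
                (G.permute (fun i => castPerm (congrFun hG i).symm (σ i))) 1 } ∧
      O ∈ Submodule.span ℚ (Tos k))
    (Hs : LG (k + 1)) (hAug : ∀ i : Fin k, Hs.α i.castSucc = α₀ i)
    (hfix : ∀ σ ∈ S, Hs.permute (extendPerm Hs α₀ hAug σ) = Hs) :
    Xk (k + 1) (Finsupp.lmapDomain ℚ ℚ (liftLG Hs) L) = 0 := by
  obtain ⟨I, O, rfl, hI, hO⟩ := hS
  let F : Gam k →ₗ[ℚ] MvPowerSeries (ℕ × Fin (k + 1)) ℚ :=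
    (Xk (k + 1)).comp (Finsupp.lmapDomain ℚ ℚ (liftLG Hs))
  have hF : ∀ G : LG k, F (Finsupp.single G 1) = XLG (liftLG Hs G) := by
    intro G
    simp [F, Xk, Finsupp.lmapDomain_apply, Finsupp.mapDomain_single]
  change F (I + O) = 0
  have hI0 : F I = 0 := by
    refine LinearMap.mem_ker.mp ((Submodule.span_le (p := LinearMap.ker F)).mpr ?_ hI)
    rintro x ⟨G, rfl, σ, hσ, rfl⟩
    have h := liftLG_permute Hs G hAug σ (hfix σ hσ)
    have hc : (fun i => castPerm (congrFun (rfl : G.α = G.α) i).symm (σ i)) = σ := by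
      funext i; ext x; rfl
    rw [SetLike.mem_coe, LinearMap.mem_ker, hc, map_sub, hF, hF, h, sub_eq_zero]
    exact (XLG_permute (liftLG Hs G) _).symm
  have hO0 : F O = 0 := by
    refine LinearMap.mem_ker.mp ((Submodule.span_le (p := LinearMap.ker F)).mpr ?_ hO)
    rintro x ⟨G, t, ⟨ha, hb, hc⟩, rfl⟩
    have hv : ∀ x y : Fin k × ℕ, x.2 < G.α x.1 → y.2 < G.α y.1 →
        ∀ p ∈ s(x, y), p.2 < G.α p.1 := by
      intro x y hx hy p hp
      rcases Sym2.mem_iff.mp hp with rfl | rfl <;> assumption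
    rw [SetLike.mem_coe, LinearMap.mem_ker, map_add, map_sub, map_sub, hF, hF, hF, hF,
      liftLG_addE, liftLG_addE, liftLG_addE, liftLG_addE]
    · simpa using XLG_triangle Hs (G.edges.map (Sym2.map liftV))
        (liftV (osA t)) (liftV (osB t)) (liftV (osC t))
    all_goals
      intro e he
      simp only [Multiset.insert_eq_cons, Multiset.mem_cons, Multiset.mem_singleton] at he
    · rcases he with rfl
      exact hv _ _ hb hc
    · rcases he with rfl | rfl
      exacts [hv _ _ ha hb, hv _ _ hb hc]
    · rcases he with rfl | rfl
      exacts [hv _ _ ha hc, hv _ _ hb hc]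
    · rcases he with rfl | rfl | rfl
      exacts [hv _ _ ha hb, hv _ _ ha hc, hv _ _ hb hc]
  rw [map_add, hI0, hO0, add_zero]
end
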